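/- Let a > 0 and b₁ ≤ b₂ be real numbers, and let ρ₁, ρ₂ : [0,∞) → (0,∞) be differentiable with ρᵢ'(t) = a·log ρᵢ(t) + bᵢ for all t ≥ 0, ρ₁(0) ≤ ρ₂(0), and a·log ρ₁(0) + b₁ > 0. Then (i) ρ₁(t) ≤ ρ₂(t) for all t ≥ 0; (ii) there exists a constant c > 0 such that ρ₂(t) − ρ₁(t) ≤ c·(1 + t·log(log(3 + t))) for all t ≥ 0; and (iii) (ρ₂(t) − ρ₁(t))/ρ₁(t) → 0 as t → ∞. -/

import Mathlib

open Set Filter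

/-- A function on `[0, ∞)` stays below a barrier which grows strictly faster at every contact. -/
theorem le_of_deriv_lt_barrier {f f' B B' : ℝ → ℝ}
    (hf : ∀ t, 0 ≤ t → HasDerivWithinAt f (f' t) (Ici 0) t)
    (hB : ∀ t, 0 ≤ t → HasDerivWithinAt B (B' t) (Ici 0) t)
    (h0 : f 0 ≤ B 0) (h : ∀ t, 0 ≤ t → f t = B t → f' t < B' t) {t : ℝ} (ht : 0 ≤ t) :
    f t ≤ B t := by
  refine image_le_of_deriv_right_lt_deriv_boundary' (a := 0) (b := t) (f := f) (f' := f')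
    (B := B) (B' := B') ?_ ?_ h0 ?_ ?_ ?_ ⟨ht, le_rfl⟩
  · exact fun s hs => (hf s hs.1).continuousWithinAt.mono Icc_subset_Ici_self
  · exact fun s hs => (hf s hs.1).mono (Ici_subset_Ici.2 hs.1)
  · exact fun s hs => (hB s hs.1).continuousWithinAt.mono Icc_subset_Ici_self
  · exact fun s hs => (hB s hs.1).mono (Ici_subset_Ici.2 hs.1)
  · exact fun s hs => h s hs.1

theorem hasDerivWithinAt_affine (p q t : ℝ) (s : Set ℝ) :
    HasDerivWithinAt (fun t => p + q * t) q s t := by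
  simpa using (((hasDerivAt_id t).const_mul q).const_add p).hasDerivWithinAt

theorem log_le_mul_sub {ε x : ℝ} (hε : 0 < ε) (hx : 0 < x) :
    Real.log x ≤ ε * x - 1 - Real.log ε := by
  have h := Real.log_le_sub_one_of_pos (mul_pos hε hx)
  rw [Real.log_mul hε.ne' hx.ne'] at h
  linarith

section LogODE

variable {a b₁ b₂ : ℝ} {ρ ρ₁ ρ₂ : ℝ → ℝ}

/-- Solutions of `ρ' = a log ρ + b` grow at least linearly. -/
theorem linear_le_of_log_ode {b r v : ℝ} (ha : 0 < a) (hr : 0 < r) (hv : 0 < v)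
    (hode : ∀ t : ℝ, 0 ≤ t → HasDerivWithinAt ρ (a * Real.log (ρ t) + b) (Ici 0) t)
    (hinit : r ≤ ρ 0) (hrv : v < a * Real.log r + b) {t : ℝ} (ht : 0 ≤ t) :
    r + v * t ≤ ρ t := by
  refine le_of_deriv_lt_barrier (fun t _ => hasDerivWithinAt_affine r v t _) hode
    (by simpa using hinit) (fun s hs hEq => ?_) ht
  have hle : r ≤ ρ s := hEq ▸ le_add_of_nonneg_right (by positivity)
  have := mul_le_mul_of_nonneg_left (Real.log_le_log hr hle) ha.le
  linarith

/-- Solutions of `ρ' = a log ρ + b` eventually lie above lines of any slope. -/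
theorem exists_mul_sub_le_of_log_ode {b m : ℝ} (ha : 0 < a) (hm : 0 < m)
    (hode : ∀ t : ℝ, 0 ≤ t → HasDerivWithinAt ρ (a * Real.log (ρ t) + b) (Ici 0) t)
    (hlow : ∀ t : ℝ, 0 ≤ t → m * (1 + t) ≤ ρ t) {L : ℝ} (hL : 0 < L) :
    ∃ T : ℝ, 0 ≤ T ∧ ∀ t : ℝ, 0 ≤ t → L * (t - T) ≤ ρ t := by
  have htend : Tendsto (fun t : ℝ => a * Real.log (m * (1 + t)) + b) atTop atTop :=
    tendsto_atTop_add_const_right _ _ ((Real.tendsto_log_atTop.comp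
      ((tendsto_atTop_add_const_left _ 1 tendsto_id).const_mul_atTop hm)).const_mul_atTop ha)
  obtain ⟨T₀, hT₀⟩ := eventually_atTop.1 (htend.eventually_gt_atTop L)
  refine ⟨max T₀ 0, le_max_right _ _, fun t ht => ?_⟩
  have hpos : ∀ t : ℝ, 0 ≤ t → 0 < m * (1 + t) := fun t ht => by positivity
  have key := le_of_deriv_lt_barrier
    (fun t _ => hasDerivWithinAt_affine (-(L * max T₀ 0)) L t _) hode ?_ ?_ ht
  · linarith
  · have := (hpos 0 le_rfl).trans_le (hlow 0 le_rfl)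
    have : 0 ≤ L * max T₀ 0 := by positivity
    linarith
  · intro s hs hEq
    have hρ := (hpos s hs).trans_le (hlow s hs)
    have hTs : max T₀ 0 < s := lt_of_mul_lt_mul_left (by linarith) hL.le
    have h1 := hT₀ s ((le_max_left _ _).trans hTs.le)
    have h2 := mul_le_mul_of_nonneg_left (Real.log_le_log (hpos s hs) (hlow s hs)) ha.le
    linarith

/-- Comparison principle for `ρ' = a log ρ + b`. -/
theorem le_of_log_ode {r : ℝ} (ha : 0 < a) (hb : b₁ ≤ b₂) (hr : 0 < r)
    (hpos₁ : ∀ t : ℝ, 0 ≤ t → 0 < ρ₁ t) (hlow₂ : ∀ t : ℝ, 0 ≤ t → r ≤ ρ₂ t)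
    (hode₁ : ∀ t : ℝ, 0 ≤ t → HasDerivWithinAt ρ₁ (a * Real.log (ρ₁ t) + b₁) (Ici 0) t)
    (hode₂ : ∀ t : ℝ, 0 ≤ t → HasDerivWithinAt ρ₂ (a * Real.log (ρ₂ t) + b₂) (Ici 0) t)
    (hinit : ρ₁ 0 ≤ ρ₂ 0) {t : ℝ} (ht : 0 ≤ t) : ρ₁ t ≤ ρ₂ t := by
  set k := a / r + 1 with hk
  have hbarrier : ∀ ε : ℝ, 0 < ε → ρ₁ t - ρ₂ t ≤ ε * Real.exp (k * t) := by
    intro ε hε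
    refine le_of_deriv_lt_barrier (f := fun t => ρ₁ t - ρ₂ t)
      (B := fun t => ε * Real.exp (k * t)) (B' := fun t => ε * (Real.exp (k * t) * k))
      (fun t ht => (hode₁ t ht).sub (hode₂ t ht)) (fun t _ => ?_) ?_ ?_ ht
    · simpa using ((((hasDerivAt_id t).const_mul k).exp).const_mul ε).hasDerivWithinAt
    · simp only [mul_zero, Real.exp_zero]
      linarith
    · intro s hs hEq
      have hρ₂ : 0 < ρ₂ s := hr.trans_le (hlow₂ s hs)
      have hd : 0 < ρ₁ s - ρ₂ s := by
        have : 0 < ε * Real.exp (k * s) := by positivity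
        exact hEq ▸ this
      have h1 := Real.log_le_sub_one_of_pos (div_pos (hpos₁ s hs) hρ₂)
      rw [Real.log_div (hpos₁ s hs).ne' hρ₂.ne', div_sub_one hρ₂.ne'] at h1
      have h2 : (ρ₁ s - ρ₂ s) / ρ₂ s ≤ (ρ₁ s - ρ₂ s) / r :=
        div_le_div_of_nonneg_left hd.le hr (hlow₂ s hs)
      have h3 := mul_le_mul_of_nonneg_left (h1.trans h2) ha.le
      have h4 : ε * (Real.exp (k * s) * k) = a * ((ρ₁ s - ρ₂ s) / r) + (ρ₁ s - ρ₂ s) := by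
        rw [← mul_assoc, ← hEq, hk]
        ring
      linarith
  have hlim : Tendsto (fun ε : ℝ => ε * Real.exp (k * t)) (nhdsWithin 0 (Ioi 0)) (nhds 0) := by
    have : Tendsto (fun ε : ℝ => ε * Real.exp (k * t)) (nhds 0) (nhds (0 * Real.exp (k * t))) :=
      tendsto_id.mul_const _
    rw [zero_mul] at this
    exact this.mono_left nhdsWithin_le_nhds
  exact sub_nonpos.1 (ge_of_tendsto hlim (eventually_nhdsWithin_of_forall hbarrier))

/-- The gap between two solutions of `ρ' = a log ρ + b` grows at most linearly. -/
theorem exists_sub_le_of_log_ode {m : ℝ} (ha : 0 < a) (hm : 0 < m)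
    (hlow₁ : ∀ t : ℝ, 0 ≤ t → m * (1 + t) ≤ ρ₁ t) (hpos₂ : ∀ t : ℝ, 0 ≤ t → 0 < ρ₂ t)
    (hode₁ : ∀ t : ℝ, 0 ≤ t → HasDerivWithinAt ρ₁ (a * Real.log (ρ₁ t) + b₁) (Ici 0) t)
    (hode₂ : ∀ t : ℝ, 0 ≤ t → HasDerivWithinAt ρ₂ (a * Real.log (ρ₂ t) + b₂) (Ici 0) t) :
    ∃ K : ℝ, 0 < K ∧ ∀ t : ℝ, 0 ≤ t → ρ₂ t - ρ₁ t ≤ K * (1 + t) := by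
  set ε := m / (2 * a) with hε
  have hεpos : 0 < ε := by positivity
  set A := a * (ε - 1 - Real.log ε) + (b₂ - b₁) with hA
  set K := |ρ₂ 0 - ρ₁ 0| + 2 * |A| + 1 with hK
  have hKpos : 0 < K := by positivity
  refine ⟨K, hKpos, fun t ht => ?_⟩
  have key := le_of_deriv_lt_barrier (f := fun t => ρ₂ t - ρ₁ t)
    (fun t ht => (hode₂ t ht).sub (hode₁ t ht))
    (fun t _ => hasDerivWithinAt_affine K K t _) ?_ ?_ ht
  · linarith
  · have := le_abs_self (ρ₂ 0 - ρ₁ 0)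
    have := abs_nonneg A
    linarith
  · intro s hs hEq
    have hs1 : 0 < 1 + s := by linarith
    have hρ₁ : 0 < ρ₁ s := (mul_pos hm hs1).trans_le (hlow₁ s hs)
    have hratio : ρ₂ s / ρ₁ s ≤ 1 + K / m := by
      have h1 : ρ₂ s = ρ₁ s + K * (1 + s) := by linarith
      have h2 : K / m * (m * (1 + s)) ≤ K / m * ρ₁ s :=
        mul_le_mul_of_nonneg_left (hlow₁ s hs) (by positivity)
      have h3 : K / m * (m * (1 + s)) = K * (1 + s) := by field_simp
      rw [div_le_iff₀ hρ₁]
      linarith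
    have hlog := log_le_mul_sub hεpos (div_pos (hpos₂ s hs) hρ₁)
    rw [Real.log_div (hpos₂ s hs).ne' hρ₁.ne'] at hlog
    have h4 := mul_le_mul_of_nonneg_left
      (hlog.trans (sub_le_sub_right (sub_le_sub_right
        (mul_le_mul_of_nonneg_left hratio hεpos.le) 1) _)) ha.le
    have h5 : a * (ε * (1 + K / m) - 1 - Real.log ε) + (b₂ - b₁) = A + K / 2 := by
      have : a * (ε * (K / m)) = K / 2 := by
        rw [hε]
        field_simp
      rw [hA]
      linarith
    have := le_abs_self A
    have := abs_nonneg (ρ₂ 0 - ρ₁ 0)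
    linarith

end LogODE

/-- comparison of expanding spheres, proof of Theorem 5 in the paper.
For solutions `ρ₁, ρ₂` of `ρᵢ' = a log ρᵢ + bᵢ` with `a > 0`, `b₁ ≤ b₂`,
`ρ₁(0) ≤ ρ₂(0)` and `a log ρ₁(0) + b₁ > 0`: (i) `ρ₁ ≤ ρ₂`;
(ii) `ρ₂(t) − ρ₁(t) ≤ c (1 + t log log(3+t))`; (iii) `(ρ₂ − ρ₁)/ρ₁ → 0`. -/
theorem stmt_7 (a b₁ b₂ : ℝ) (ha : 0 < a) (hb : b₁ ≤ b₂) (ρ₁ ρ₂ : ℝ → ℝ)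
    (hpos₁ : ∀ t : ℝ, 0 ≤ t → 0 < ρ₁ t)
    (hpos₂ : ∀ t : ℝ, 0 ≤ t → 0 < ρ₂ t)
    (hode₁ : ∀ t : ℝ, 0 ≤ t →
      HasDerivWithinAt ρ₁ (a * Real.log (ρ₁ t) + b₁) (Set.Ici 0) t)
    (hode₂ : ∀ t : ℝ, 0 ≤ t →
      HasDerivWithinAt ρ₂ (a * Real.log (ρ₂ t) + b₂) (Set.Ici 0) t)
    (hinit : ρ₁ 0 ≤ ρ₂ 0)
    (h0 : 0 < a * Real.log (ρ₁ 0) + b₁) :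
    (∀ t : ℝ, 0 ≤ t → ρ₁ t ≤ ρ₂ t) ∧
    (∃ c : ℝ, 0 < c ∧ ∀ t : ℝ, 0 ≤ t →
      ρ₂ t - ρ₁ t ≤ c * (1 + t * Real.log (Real.log (3 + t)))) ∧
    Tendsto (fun t => (ρ₂ t - ρ₁ t) / ρ₁ t) atTop (nhds 0) := by
  have hr : 0 < ρ₁ 0 := hpos₁ 0 le_rfl
  set v := (a * Real.log (ρ₁ 0) + b₁) / 2 with hv
  have hvpos : 0 < v := by positivity
  have hlin₁ : ∀ t : ℝ, 0 ≤ t → ρ₁ 0 + v * t ≤ ρ₁ t := fun t ht =>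
    linear_le_of_log_ode ha hr hvpos hode₁ le_rfl (by linarith) ht
  have hlin₂ : ∀ t : ℝ, 0 ≤ t → ρ₁ 0 + v * t ≤ ρ₂ t := fun t ht =>
    linear_le_of_log_ode ha hr hvpos hode₂ hinit (by linarith) ht
  have hm : 0 < min (ρ₁ 0) v := lt_min hr hvpos
  have hlow₁ : ∀ t : ℝ, 0 ≤ t → min (ρ₁ 0) v * (1 + t) ≤ ρ₁ t := fun t ht => by
    have h1 := mul_le_mul_of_nonneg_right (min_le_right (ρ₁ 0) v) ht
    linarith [hlin₁ t ht, min_le_left (ρ₁ 0) v]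
  have hle : ∀ t : ℝ, 0 ≤ t → ρ₁ t ≤ ρ₂ t := fun t ht =>
    le_of_log_ode ha hb hr hpos₁
      (fun s hs => (le_add_of_nonneg_right (by positivity)).trans (hlin₂ s hs))
      hode₁ hode₂ hinit ht
  obtain ⟨K, hK, hgap⟩ := exists_sub_le_of_log_ode ha hm hlow₁ hpos₂ hode₁ hode₂
  refine ⟨hle, ?_, ?_⟩
  · have hlog3 : 1 < Real.log 3 := by
      rw [Real.lt_log_iff_exp_lt (by norm_num)]
      exact Real.exp_one_lt_three
    have hδ : 0 < Real.log (Real.log 3) := Real.log_pos hlog3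
    set δ := Real.log (Real.log 3)
    refine ⟨K + K / δ, by positivity, fun t ht => (hgap t ht).trans ?_⟩
    have hmono : δ ≤ Real.log (Real.log (3 + t)) :=
      Real.log_le_log (by linarith) (Real.log_le_log (by norm_num) (by linarith))
    have h1 : (K + K / δ) * (1 + t * δ) ≤ (K + K / δ) * (1 + t * Real.log (Real.log (3 + t))) := by
      gcongr
    have h2 : (K + K / δ) * (1 + t * δ) = K * (1 + t) + K / δ + K * t * δ := by
      field_simp
      ring
    have h3 : 0 ≤ K / δ + K * t * δ := by positivity
    linarith
  · rw [Metric.tendsto_atTop]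
    intro ε hε
    obtain ⟨T, hT, hline⟩ := exists_mul_sub_le_of_log_ode ha hm hode₁ hlow₁
      (L := 2 * K / ε) (by positivity)
    refine ⟨2 * T + 2, fun t ht => ?_⟩
    have ht0 : 0 ≤ t := by linarith
    have hρ := hpos₁ t ht0
    rw [Real.dist_0_eq_abs, abs_of_nonneg (div_nonneg (sub_nonneg.2 (hle t ht0)) hρ.le),
      div_lt_iff₀ hρ]
    have h1 := mul_le_mul_of_nonneg_left (hline t ht0) hε.le
    have h2 : ε * (2 * K / ε * (t - T)) = K * (2 * (t - T)) := by
      field_simp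
    have h3 : K * (1 + t) < K * (2 * (t - T)) := mul_lt_mul_of_pos_left (by linarith) hK
    linarith [hgap t ht0]
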